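/- arXiv:2605.09592 — 2 statements merged into one kernel-verified Lean document; each statement's English description precedes it below -/
import Mathlib

section
/- If x and y are real numbers with 2 ≤ y ≤ x and x ≥ 4, then ψ(x, y) ≥ x^(1 − (log log x)/(log y)). -/
/-!
For `u = log x / log y` the bound reads `ψ(x, y) ≥ x / (log x) ^ u`. Expanding
`log n = ∑ d ∣ n, Λ d` over the smooth `n ≤ x` and keeping the factorizations `n = m * d` with
`m` smooth and `d ≤ min y (x / m)` shows that the sum of the Chebyshev function over all
`min y (x / m)` is at most `ψ(x, y) log x`. Three ranges of `y` and `x` remain.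

* If `y ≤ 21`, then `x / (log x) ^ u ≤ exp (y / (e log y))` for every `x`, and the integers up to
  `y`, together with `4`, are already numerous enough.
* If `21 ≤ y ≤ x ≤ y ^ 2`, then Chebyshev's lower bound with the constant `0.49`, applied for every
  `m ≤ y`, suffices.
* If `y ≥ 21` and `x > y ^ 2`, keeping only `m ≤ x / y` gives
  `(y / 2) ψ(x / y, y) ≤ ψ(x, y) log x`. This reduces `u` by one, and Bernoulli's inequality
  `(u / (u - 1)) ^ (u - 1) ≥ 2` absorbs the factor `1 / 2`.
-/

section

open Finset Real
open ArithmeticFunction (vonMangoldt vonMangoldt_nonneg vonMangoldt_sum)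
open Chebyshev (psi psi_mono psi_nonneg psi_ge' psi_eq_log_lcmUpto)

/-! ### Real inequalities -/

lemma rpow_one_sub_log_log_div {x : ℝ} (hx : 1 < x) (y : ℝ) :
    x ^ (1 - log (log x) / log y) = x / log x ^ logb y x := by
  have hx0 : 0 < x := by linarith
  rw [rpow_sub hx0, rpow_one, rpow_def_of_pos hx0, rpow_def_of_pos (log_pos hx), logb,
    mul_div_left_comm]

lemma logb_eq_logb_div_add_one {x y : ℝ} (hx : x ≠ 0) (hy : 1 < y) :
    logb y x = logb y (x / y) + 1 := by
  rw [logb_div hx (by linarith), logb_self_eq_one hy, sub_add_cancel]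

lemma log_le_div_exp_one {s : ℝ} (hs : 0 < s) : log s ≤ s / exp 1 := by
  rw [le_div_iff₀ (exp_pos 1), mul_comm]
  simpa only [exp_log hs] using exp_one_mul_le_exp (x := log s)

/-- The right-hand side is the maximum of the left-hand side, attained at `log x = y / e`. -/
lemma div_log_rpow_logb_le_exp {x y : ℝ} (hx : 1 < x) (hy : 1 < y) :
    x / log x ^ logb y x ≤ exp (y / (exp 1 * log y)) := by
  have hL : 0 < log x := log_pos hx
  have hl : 0 < log y := log_pos hy
  have hlog : log y - log (log x) ≤ y / log x / exp 1 := by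
    rw [← log_div (by positivity) hL.ne']
    exact log_le_div_exp_one (by positivity)
  rw [← rpow_one_sub_log_log_div hx, rpow_def_of_pos (by positivity), exp_le_exp]
  calc log x * (1 - log (log x) / log y)
      = log x / log y * (log y - log (log x)) := by field_simp
    _ ≤ log x / log y * (y / log x / exp 1) := by gcongr
    _ = y / (exp 1 * log y) := by field_simp

lemma natCast_div_le_log {a : ℝ} {k r : ℕ} (hk : k ≠ 0) (h : (2.7182818286 : ℝ) ^ r ≤ a ^ k) :
    (r : ℝ) / k ≤ log a := by
  have hpow : exp 1 ^ r ≤ a ^ k :=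
    (pow_le_pow_left₀ (exp_pos 1).le exp_one_lt_d9.le r).trans h
  have hlog := log_le_log (by positivity) hpow
  rw [log_pow, log_pow, log_exp, mul_one] at hlog
  rwa [div_le_iff₀' (by positivity)]

lemma one_sub_div_le_log_sub_log {a b : ℝ} (ha : 0 < a) (hb : 0 < b) :
    1 - a / b ≤ log b - log a := by
  simpa only [inv_div, log_div hb.ne' ha.ne'] using one_sub_inv_le_log_of_pos (div_pos hb ha)

lemma two_mul_log_two : 2 * log 2 = log 4 := by
  rw [show (4 : ℝ) = 2 ^ 2 by norm_num, log_pow, Nat.cast_ofNat]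

lemma two_mul_rpow_le_add_rpow {a b : ℝ} (ha : 0 < a) (hab : a ≤ b) :
    2 * b ^ (b / a) ≤ (a + b) ^ (b / a) := by
  have hb : 0 < b := ha.trans_le hab
  have bernoulli : 2 ≤ (1 + a / b) ^ (b / a) := by
    have h := one_add_mul_self_le_rpow_one_add (s := a / b) (by linarith [div_pos ha hb])
      ((one_le_div ha).2 hab)
    rwa [div_mul_div_cancel₀ ha.ne', div_self hb.ne', one_add_one_eq_two] at h
  calc 2 * b ^ (b / a) ≤ (1 + a / b) ^ (b / a) * b ^ (b / a) := by gcongr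
    _ = (a + b) ^ (b / a) := by
      rw [← mul_rpow (by positivity) hb.le, add_mul, one_mul, div_mul_cancel₀ _ hb.ne', add_comm]

lemma one_le_mul_four_fifths_add_max_mul_rpow {l θ : ℝ} (hl : 3 ≤ l) (hθ : 0 ≤ θ) :
    1 ≤ 0.49 * (4 / 5 + max 0 ((1 - θ) * l - 1 / 4)) * ((1 + θ) * l) ^ θ := by
  have hT : (1 - θ) * l - 1 / 4 ≤ max 0 ((1 - θ) * l - 1 / 4) := le_max_right _ _
  have hT0 : 0 ≤ max 0 ((1 - θ) * l - 1 / 4) := le_max_left _ _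
  set T := max 0 ((1 - θ) * l - 1 / 4)
  have four_rpow_le {r : ℝ} (hr : 1 / 2 ≤ θ) (hrθ : r ≤ θ) : 4 ^ r ≤ ((1 + θ) * l) ^ θ :=
    (rpow_le_rpow_of_exponent_le (by norm_num) hrθ).trans
      (rpow_le_rpow (by norm_num) (by nlinarith) hθ)
  have four_rpow_half : (4 : ℝ) ^ (1 / 2 : ℝ) = 2 := by
    rw [← sqrt_eq_rpow, show (4 : ℝ) = 2 ^ 2 by norm_num, sqrt_sq zero_le_two]
  rcases le_total θ (1 / 2) with hθ2 | hθ2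
  · have hpow : 1 ≤ ((1 + θ) * l) ^ θ := one_le_rpow (by nlinarith) hθ
    nlinarith
  rcases le_total θ (3 / 4) with hθ4 | hθ4
  · have hpow := four_rpow_le hθ2 hθ2
    rw [four_rpow_half] at hpow
    nlinarith
  · have hpow := four_rpow_le hθ2 hθ4
    have h8 : (4 : ℝ) ^ (3 / 4 : ℝ) = √8 := by
      rw [sqrt_eq_rpow, show (4 : ℝ) = 2 ^ (2 : ℝ) by norm_num,
        show (8 : ℝ) = 2 ^ (3 : ℝ) by norm_num, ← rpow_mul zero_le_two, ← rpow_mul zero_le_two]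
      norm_num
    have hsqrt : 2.8 ≤ √8 := le_sqrt_of_sq_le (by norm_num)
    rw [h8] at hpow
    nlinarith

/-! ### Harmonic sums -/

lemma log_div_le_harmonic_sub_harmonic {a b : ℕ} (hab : a ≤ b) :
    log ((b + 1) / (a + 1)) ≤ harmonic b - harmonic a := by
  have h := strictMono_eulerMascheroniSeq.monotone hab
  simp only [eulerMascheroniSeq] at h
  rw [log_div (by positivity) (by positivity)]
  linarith

lemma harmonic_add_sum_Ioc {a b : ℕ} (hab : a ≤ b) :
    (harmonic a : ℝ) + ∑ m ∈ Ioc a b, (m : ℝ)⁻¹ = harmonic b := by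
  have hcast (n : ℕ) : (harmonic n : ℝ) = ∑ m ∈ Ioc 0 n, (m : ℝ)⁻¹ := by
    rw [harmonic_eq_sum_Icc, ← Icc_add_one_left_eq_Ioc]
    push_cast
    rfl
  rw [hcast, hcast, sum_Ioc_consecutive _ a.zero_le hab]

lemma log_div_sub_le_harmonic_floor_sub {y z : ℝ} (hz : 4 ≤ z) (hzy : z ≤ y) :
    log (y / z) - 1 / 4 ≤ harmonic ⌊y⌋₊ - harmonic ⌊z⌋₊ := by
  have hz0 : 0 < z := by linarith
  have hy0 : 0 < y := by linarith
  have hy : y ≤ ⌊y⌋₊ + 1 := (Nat.lt_floor_add_one y).le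
  have hz' : (⌊z⌋₊ : ℝ) ≤ z := Nat.floor_le (by linarith)
  calc log (y / z) - 1 / 4 ≤ log (y / z) + log (4 / 5) := by
        linarith [one_sub_inv_le_log_of_pos (x := 4 / 5) (by norm_num)]
    _ = log (y / (5 / 4 * z)) := by
        rw [← log_mul (div_pos hy0 hz0).ne' (by norm_num)]
        congr 1
        field_simp
    _ ≤ log ((⌊y⌋₊ + 1) / (⌊z⌋₊ + 1)) := by
        gcongr
        linarith
    _ ≤ harmonic ⌊y⌋₊ - harmonic ⌊z⌋₊ :=
        log_div_le_harmonic_sub_harmonic (Nat.floor_le_floor hzy)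

lemma sum_min_div_eq {x y : ℝ} (hy : 0 < y) (hxy : x ≤ y * y) :
    ∑ m ∈ Ioc 0 ⌊y⌋₊, min y (x / m) =
      ⌊x / y⌋₊ * y + x * (harmonic ⌊y⌋₊ - harmonic ⌊x / y⌋₊) := by
  have hle : ⌊x / y⌋₊ ≤ ⌊y⌋₊ := Nat.floor_le_floor ((div_le_iff₀ hy).2 hxy)
  rw [← sum_Ioc_consecutive _ (Nat.zero_le _) hle, ← harmonic_add_sum_Ioc hle,
    add_sub_cancel_left, mul_sum]
  congr 1
  · rw [sum_congr rfl (g := fun _ ↦ y), sum_const, Nat.card_Ioc, tsub_zero, nsmul_eq_mul]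
    intro m hm
    obtain ⟨hm0, hmz⟩ := mem_Ioc.1 hm
    rw [Nat.le_floor_iff' hm0.ne', le_div_comm₀ (by positivity) hy] at hmz
    exact min_eq_left hmz
  · refine sum_congr rfl fun m hm ↦ ?_
    have hzm : x / y < m := Nat.lt_of_floor_lt (mem_Ioc.1 hm).1
    have hm0 : (0 : ℝ) < m := Nat.cast_pos.2 (Nat.zero_lt_of_lt (mem_Ioc.1 hm).1)
    rw [min_eq_right ((div_lt_comm₀ hm0 hy).2 hzm).le, div_eq_mul_inv]

lemma mul_four_fifths_add_max_le_sum_min {x y : ℝ} (hy : 0 < y) (hxy : x ≤ y * y)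
    (hz : 4 ≤ x / y) :
    x * (4 / 5 + max 0 (log (y / (x / y)) - 1 / 4)) ≤ ∑ m ∈ Ioc 0 ⌊y⌋₊, min y (x / m) := by
  have hx : 0 ≤ x := by linarith [(le_div_iff₀ hy).1 hz]
  have hzy : x / y ≤ y := (div_le_iff₀ hy).2 hxy
  have hfloor : 4 / 5 * (x / y) ≤ ⌊x / y⌋₊ := by
    have h4 : (4 : ℝ) ≤ ⌊x / y⌋₊ := mod_cast Nat.le_floor (n := 4) (mod_cast hz)
    linarith [Nat.lt_floor_add_one (x / y)]
  have hharmonic : max 0 (log (y / (x / y)) - 1 / 4) ≤ harmonic ⌊y⌋₊ - harmonic ⌊x / y⌋₊ := by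
    refine max_le ?_ (log_div_sub_le_harmonic_floor_sub hz hzy)
    rw [← harmonic_add_sum_Ioc (Nat.floor_le_floor hzy), add_sub_cancel_left]
    positivity
  rw [sum_min_div_eq hy hxy, mul_add]
  refine add_le_add ?_ (by gcongr)
  calc x * (4 / 5) = 4 / 5 * (x / y) * y := by field_simp
    _ ≤ ⌊x / y⌋₊ * y := by gcongr

/-! ### Chebyshev's lower bound -/

lemma natCast_div_le_psi {n k r : ℕ} {t : ℝ} (hk : k ≠ 0)
    (h : (2.7182818286 : ℝ) ^ r ≤ Nat.lcmUpto n ^ k) (hnt : n ≤ t) : (r : ℝ) / k ≤ psi t :=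
  ((natCast_div_le_log hk h).trans_eq (psi_eq_log_lcmUpto n).symm).trans (psi_mono hnt)

lemma half_le_psi_of_twenty_le {t : ℝ} (ht : 20 ≤ t) : t / 2 ≤ psi t := by
  have hpsi := psi_ge' (x := t) (by linarith)
  have hlog := log_le_sub_one_of_pos (x := (t + 2) / 16) (by linarith)
  rw [log_div (by linarith) (by norm_num), show (16 : ℝ) = 2 ^ 4 by norm_num, log_pow] at hlog
  push_cast at hlog
  nlinarith [log_two_gt_d9]

lemma half_le_psi_of_five_le {t : ℝ} (ht : 5 ≤ t) : t / 2 ≤ psi t := by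
  rcases lt_or_ge t 8 with h8 | h8
  · have h := natCast_div_le_psi (n := 5) (k := 1) (r := 4) one_ne_zero
      (by rw [show Nat.lcmUpto 5 = 60 by rfl]; norm_num) (mod_cast ht)
    norm_num at h
    linarith
  rcases lt_or_ge t 12 with h12 | h12
  · have h := natCast_div_le_psi (n := 7) (k := 1) (r := 6) (t := t) one_ne_zero
      (by rw [show Nat.lcmUpto 7 = 420 by rfl]; norm_num) (by norm_num; linarith)
    norm_num at h
    linarith
  rcases lt_or_ge t 20 with h20 | h20
  · have h := natCast_div_le_psi (n := 11) (k := 1) (r := 10) (t := t) one_ne_zero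
      (by rw [show Nat.lcmUpto 11 = 27720 by rfl]; norm_num) (by norm_num; linarith)
    norm_num at h
    linarith
  exact half_le_psi_of_twenty_le h20

lemma mul_le_psi_of_four_le {t : ℝ} (ht : 4 ≤ t) : 0.49 * t ≤ psi t := by
  rcases lt_or_ge t 5 with h5 | h5
  · have h := natCast_div_le_psi (n := 4) (k := 20) (r := 49) (by norm_num)
      (by rw [show Nat.lcmUpto 4 = 12 by rfl]; norm_num) (mod_cast ht)
    norm_num at h ⊢
    linarith
  · linarith [half_le_psi_of_five_le h5]

/-! ### Smooth numbers up to a real bound -/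

/-- The finite set of `y`-smooth positive integers up to `x`, whose cardinality is `ψ(x, y)`.
Mathlib's `Nat.smoothNumbersUpTo` takes natural bounds and requires prime factors to be strictly
below the second one, whence the `+ 1`. -/
noncomputable def smoothNumbersLE (x y : ℝ) : Finset ℕ :=
  Nat.smoothNumbersUpTo ⌊x⌋₊ (⌊y⌋₊ + 1)

variable {x y : ℝ}

lemma mem_smoothNumbersLE {n : ℕ} :
    n ∈ smoothNumbersLE x y ↔
      1 ≤ n ∧ (n : ℝ) ≤ x ∧ ∀ p : ℕ, p.Prime → p ∣ n → (p : ℝ) ≤ y := by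
  rw [smoothNumbersLE, Nat.mem_smoothNumbersUpTo]
  rcases eq_or_ne n 0 with rfl | hn
  · simp [Nat.mem_smoothNumbers]
  · rw [Nat.le_floor_iff' hn, Nat.mem_smoothNumbers']
    simp +contextual only [Nat.lt_add_one_iff, Nat.le_floor_iff' (Nat.Prime.ne_zero _),
      Nat.one_le_iff_ne_zero, ne_eq, hn, not_false_eq_true, true_and]

lemma mem_smoothNumbersLE_of_le {n : ℕ} (hn : 1 ≤ n) (hnx : n ≤ x) (hny : n ≤ y) :
    n ∈ smoothNumbersLE x y :=
  mem_smoothNumbersLE.2 ⟨hn, hnx, fun _ _ hpn ↦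
    (Nat.cast_le.2 (Nat.le_of_dvd hn hpn)).trans hny⟩

lemma mul_mem_smoothNumbersLE {m d : ℕ} (hm : m ∈ smoothNumbersLE x y) (hd : 1 ≤ d)
    (hdy : d ≤ y) (hdx : d ≤ x / m) : m * d ∈ smoothNumbersLE x y := by
  obtain ⟨hm1, -, hmy⟩ := mem_smoothNumbersLE.1 hm
  refine mem_smoothNumbersLE.2 ⟨Nat.mul_pos hm1 hd, ?_, fun p hp hpmd ↦ ?_⟩
  · push_cast
    rwa [← le_div_iff₀' (by positivity)]
  · rcases hp.dvd_mul.1 hpmd with hpm | hpd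
    · exact hmy p hp hpm
    · exact (Nat.cast_le.2 (Nat.le_of_dvd hd hpd)).trans hdy

lemma Ioc_floor_subset_smoothNumbersLE (hyx : y ≤ x) : Ioc 0 ⌊y⌋₊ ⊆ smoothNumbersLE x y := by
  intro n hn
  obtain ⟨hn0, hny⟩ := mem_Ioc.1 hn
  rw [Nat.le_floor_iff' hn0.ne'] at hny
  exact mem_smoothNumbersLE_of_le hn0 (hny.trans hyx) hny

lemma floor_le_card_smoothNumbersLE (hyx : y ≤ x) : ⌊y⌋₊ ≤ #(smoothNumbersLE x y) := by
  simpa only [Nat.card_Ioc, tsub_zero] using card_le_card (Ioc_floor_subset_smoothNumbersLE hyx)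

lemma floor_add_one_le_card_smoothNumbersLE (hy : 2 ≤ y) (hy4 : y < 4) (hx : 4 ≤ x) :
    ⌊y⌋₊ + 1 ≤ #(smoothNumbersLE x y) := by
  have hfloor : ⌊y⌋₊ < 4 := (Nat.floor_lt (by linarith)).2 (mod_cast hy4)
  have four_mem : 4 ∈ smoothNumbersLE x y := by
    refine mem_smoothNumbersLE.2 ⟨by norm_num, mod_cast hx, fun p hp hp4 ↦ ?_⟩
    rw [(Nat.prime_dvd_prime_iff_eq hp Nat.prime_two).1
      (hp.dvd_of_dvd_pow (show p ∣ 2 ^ 2 from hp4))]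
    exact_mod_cast hy
  have hcard := card_le_card
    (insert_subset four_mem (Ioc_floor_subset_smoothNumbersLE (hy4.le.trans hx)))
  rwa [card_insert_of_notMem (by simp [hfloor]), Nat.card_Ioc, tsub_zero] at hcard

/-- The pair `(m, d)` on the left contributes the term `Λ d` of `log (m * d) = ∑ d ∣ m * d, Λ d`. -/
lemma sum_psi_min_le_sum_log :
    ∑ m ∈ smoothNumbersLE x y, psi (min y (x / m)) ≤ ∑ n ∈ smoothNumbersLE x y, log n := by
  simp only [psi, ← vonMangoldt_sum, sum_sigma']
  let mulFst : (_ : ℕ) × ℕ → (_ : ℕ) × ℕ := fun a ↦ ⟨a.1 * a.2, a.2⟩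
  set pairs := (smoothNumbersLE x y).sigma fun m ↦ Ioc 0 ⌊min y (x / m)⌋₊
  have mulFst_injOn : Set.InjOn mulFst pairs := by
    rintro ⟨m, d⟩ hmd ⟨m', d'⟩ - h
    obtain ⟨hmul, rfl⟩ : m * d = m' * d' ∧ d = d' := by simpa [mulFst] using h
    have hd : 0 < d := (mem_Ioc.1 (mem_sigma.1 hmd).2).1
    rw [Nat.eq_of_mul_eq_mul_right hd hmul]
  calc ∑ a ∈ pairs, vonMangoldt a.2 = ∑ a ∈ pairs.image mulFst, vonMangoldt a.2 :=
        (sum_image (f := fun a ↦ vonMangoldt a.2) mulFst_injOn).symm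
    _ ≤ ∑ a ∈ (smoothNumbersLE x y).sigma Nat.divisors, vonMangoldt a.2 := by
        refine sum_le_sum_of_subset_of_nonneg (image_subset_iff.2 ?_)
          fun _ _ _ ↦ vonMangoldt_nonneg
        rintro ⟨m, d⟩ hmd
        obtain ⟨hm, hd⟩ := mem_sigma.1 hmd
        obtain ⟨hd0, hd⟩ := mem_Ioc.1 hd
        rw [Nat.le_floor_iff' hd0.ne', le_min_iff] at hd
        have hm0 : 0 < m := (mem_smoothNumbersLE.1 hm).1
        exact mem_sigma.2 ⟨mul_mem_smoothNumbersLE hm hd0 hd.1 hd.2,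
          Nat.mem_divisors.2 ⟨dvd_mul_left d m, (Nat.mul_pos hm0 hd0).ne'⟩⟩

lemma sum_psi_min_le_card_mul_log :
    ∑ m ∈ smoothNumbersLE x y, psi (min y (x / m)) ≤ #(smoothNumbersLE x y) * log x := by
  rw [← nsmul_eq_mul]
  refine sum_psi_min_le_sum_log.trans (sum_le_card_nsmul _ _ _ fun n hn ↦ ?_)
  obtain ⟨hn, hnx, -⟩ := mem_smoothNumbersLE.1 hn
  exact log_le_log (mod_cast hn) hnx

lemma sum_psi_min_le_of_subset {s : Finset ℕ} (hs : s ⊆ smoothNumbersLE x y) :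
    ∑ m ∈ s, psi (min y (x / m)) ≤ #(smoothNumbersLE x y) * log x :=
  (sum_le_sum_of_subset_of_nonneg hs fun _ _ _ ↦ psi_nonneg _).trans sum_psi_min_le_card_mul_log

lemma psi_mul_card_le_card_mul_log (hy : 1 ≤ y) :
    psi y * #(smoothNumbersLE (x / y) y) ≤ #(smoothNumbersLE x y) * log x := by
  have hy0 : 0 < y := by linarith
  have le_div {m : ℕ} (hm : m ∈ smoothNumbersLE (x / y) y) : y ≤ x / m := by
    obtain ⟨hm1, hmx, -⟩ := mem_smoothNumbersLE.1 hm
    rwa [le_div_comm₀ (by positivity) hy0] at hmx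
  have hsub : smoothNumbersLE (x / y) y ⊆ smoothNumbersLE x y := by
    intro m hm
    obtain ⟨hm1, hmx, hmy⟩ := mem_smoothNumbersLE.1 hm
    have hx : m * y ≤ x := (le_div_iff₀ hy0).1 hmx
    exact mem_smoothNumbersLE.2 ⟨hm1, by nlinarith [(m.cast_nonneg : (0 : ℝ) ≤ m)], hmy⟩
  refine le_trans ?_ (sum_psi_min_le_of_subset hsub)
  rw [mul_comm, ← nsmul_eq_mul]
  exact card_nsmul_le_sum _ _ _ fun m hm ↦ by rw [min_eq_left (le_div hm)]

lemma mul_sum_min_le_card_mul_log {c : ℝ} (hy : 0 < y) (hyx : y ≤ x) (hxy : x ≤ y * y)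
    (hc : ∀ t, x / y ≤ t → c * t ≤ psi t) :
    c * ∑ m ∈ Ioc 0 ⌊y⌋₊, min y (x / m) ≤ #(smoothNumbersLE x y) * log x := by
  refine le_trans ?_ (sum_psi_min_le_of_subset (Ioc_floor_subset_smoothNumbersLE hyx))
  rw [mul_sum]
  refine sum_le_sum fun m hm ↦ hc _ (le_min ((div_le_iff₀ hy).2 hxy) ?_)
  obtain ⟨hm0, hmy⟩ := mem_Ioc.1 hm
  rw [Nat.le_floor_iff' hm0.ne'] at hmy
  gcongr
  linarith

/-! ### The range `y ≤ 21` -/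

lemma div_log_rpow_le_of_le_exp_mul_log {n : ℕ} (hx : 1 < x) (hy : 1 < y)
    (hn : y ≤ exp 1 * log y * log n) : x / log x ^ logb y x ≤ n := by
  have hl : 0 < log y := log_pos hy
  have hn0 : (n : ℝ) ≠ 0 := by
    rintro h
    rw [h, log_zero] at hn
    linarith
  calc x / log x ^ logb y x ≤ exp (y / (exp 1 * log y)) := div_log_rpow_logb_le_exp hx hy
    _ ≤ exp (log n) := exp_le_exp.2 ((div_le_iff₀' (by positivity)).2 hn)
    _ = n := exp_log (by positivity)

lemma le_exp_mul_log_mul_log {a b c s t : ℝ} (ha : 0 ≤ a) (hb : 0 ≤ b) (has : a ≤ log s)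
    (hbt : b ≤ log t) (hc : c ≤ 2.718 * a * b) : c ≤ exp 1 * log s * log t := by
  have hs : 0 ≤ log s := ha.trans has
  have hexp : 2.718 ≤ exp 1 := by linarith [exp_one_gt_d9]
  calc c ≤ 2.718 * a * b := hc
    _ ≤ exp 1 * log s * log t := by gcongr

lemma le_exp_mul_log_mul_log_floor_add_one (hy : 2 ≤ y) (hy4 : y < 4) :
    y ≤ exp 1 * log y * log (⌊y⌋₊ + 1 : ℕ) := by
  rcases lt_or_ge y 3 with hy3 | hy3
  · have hfloor : 2 ≤ ⌊y⌋₊ := Nat.le_floor (mod_cast hy)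
    have hlog3 : 1.0986 ≤ log (⌊y⌋₊ + 1 : ℕ) := by
      refine le_trans (by linarith [log_three_gt_d9]) (log_le_log three_pos ?_)
      exact_mod_cast Nat.succ_le_succ hfloor
    have hlogy : 1.6931 - 2 / y ≤ log y := by
      linarith [one_sub_div_le_log_sub_log two_pos (b := y) (by linarith), log_two_gt_d9]
    have hy0 : 2 / y ≤ 1 := (div_le_one (by linarith)).2 hy
    refine le_exp_mul_log_mul_log (by linarith) (by norm_num) hlogy hlog3 ?_
    have hquad : y * y ≤ 2.718 * (1.6931 * y - 2) * 1.0986 := by nlinarith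
    calc y = y * y / y := by field_simp
      _ ≤ 2.718 * (1.6931 * y - 2) * 1.0986 / y := by gcongr
      _ = 2.718 * (1.6931 - 2 / y) * 1.0986 := by field_simp
  · have hfloor : 3 ≤ ⌊y⌋₊ := Nat.le_floor (mod_cast hy3)
    have hlog4 : 1.386 ≤ log (⌊y⌋₊ + 1 : ℕ) := by
      refine le_trans (by linarith [two_mul_log_two, log_two_gt_d9]) (log_le_log four_pos ?_)
      exact_mod_cast Nat.succ_le_succ hfloor
    have hlogy : 1.0986 ≤ log y :=
      le_trans (by linarith [log_three_gt_d9]) (log_le_log three_pos hy3)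
    exact le_exp_mul_log_mul_log (by norm_num) (by norm_num) hlogy hlog4 (by linarith)

lemma le_exp_mul_log_mul_log_floor_of_mem_Icc {n : ℕ} {b q : ℝ} (hn : n ≠ 0)
    (hyn : y ∈ Set.Icc (n : ℝ) b) (hq : 0 ≤ q) (hqn : q ≤ log n) (hb : b ≤ 2.718 * q * q) :
    y ≤ exp 1 * log y * log ⌊y⌋₊ := by
  have hlogy : q ≤ log y := hqn.trans (log_le_log (by positivity) hyn.1)
  have hlogfloor : q ≤ log ⌊y⌋₊ :=
    hqn.trans (log_le_log (by positivity) (mod_cast Nat.le_floor hyn.1))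
  exact le_exp_mul_log_mul_log hq hq hlogy hlogfloor (hyn.2.trans hb)

lemma le_exp_mul_log_mul_log_floor (hy : 4 ≤ y) (hy21 : y ≤ 21) :
    y ≤ exp 1 * log y * log ⌊y⌋₊ := by
  have bound {n k r : ℕ} {b : ℝ} (hk : k ≠ 0) (hn : n ≠ 0)
      (hlog : (2.7182818286 : ℝ) ^ r ≤ n ^ k) (hb : b ≤ 2.718 * (r / k) * (r / k))
      (hny : n ≤ y) (hyb : y ≤ b) : y ≤ exp 1 * log y * log ⌊y⌋₊ :=
    le_exp_mul_log_mul_log_floor_of_mem_Icc hn ⟨hny, hyb⟩ (by positivity)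
      (natCast_div_le_log hk hlog) hb
  rcases le_total y 5 with h5 | h5
  · exact bound (n := 4) (k := 50) (r := 69) (by norm_num) (by norm_num) (by norm_num)
      (by norm_num) (mod_cast hy) h5
  rcases le_total y 7 with h7 | h7
  · exact bound (n := 5) (k := 23) (r := 37) (by norm_num) (by norm_num) (by norm_num)
      (by norm_num) (mod_cast h5) h7
  rcases le_total y 10 with h10 | h10
  · exact bound (n := 7) (k := 50) (r := 97) (by norm_num) (by norm_num) (by norm_num)
      (by norm_num) (mod_cast h7) h10
  rcases le_total y 14 with h14 | h14
  · exact bound (n := 10) (k := 10) (r := 23) (by norm_num) (by norm_num) (by norm_num)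
      (by norm_num) (mod_cast h10) h14
  rcases le_total y 18 with h18 | h18
  · exact bound (n := 14) (k := 5) (r := 13) (by norm_num) (by norm_num) (by norm_num)
      (by norm_num) (mod_cast h14) h18
  · exact bound (n := 18) (k := 5) (r := 14) (by norm_num) (by norm_num) (by norm_num)
      (by norm_num) (mod_cast h18) hy21

lemma div_log_rpow_le_card_of_le_twenty_one (hy : 2 ≤ y) (hx : 4 ≤ x) (hyx : y ≤ x)
    (hy21 : y ≤ 21) : x / log x ^ logb y x ≤ #(smoothNumbersLE x y) := by
  rcases lt_or_ge y 4 with hy4 | hy4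
  · exact (div_log_rpow_le_of_le_exp_mul_log (by linarith) (by linarith)
      (le_exp_mul_log_mul_log_floor_add_one hy hy4)).trans
      (mod_cast floor_add_one_le_card_smoothNumbersLE hy hy4 hx)
  · exact (div_log_rpow_le_of_le_exp_mul_log (by linarith) (by linarith)
      (le_exp_mul_log_mul_log_floor hy4 hy21)).trans
      (mod_cast floor_le_card_smoothNumbersLE hyx)

/-! ### The range `21 ≤ y ≤ x ≤ y ^ 2` -/

lemma three_le_log (hy : 21 ≤ y) : 3 ≤ log y := by
  have h := natCast_div_le_log (a := y) (k := 1) (r := 3) one_ne_zero (by norm_num; linarith)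
  simpa only [Nat.cast_ofNat, Nat.cast_one, div_one] using h

lemma le_sub_one_mul_log (hy : 21 ≤ y) (hyx : y ≤ x) (hx : x ≤ 4 * y) :
    x ≤ (y - 1) * log x := by
  have hy0 : 0 < y := by linarith
  have hx0 : 0 < x := by linarith
  set z := x / y with hz
  have hz1 : 1 ≤ z := (one_le_div hy0).2 hyx
  have hz4 : z ≤ 4 := (div_le_iff₀ hy0).2 hx
  have hlog : 5.386 - 4 / z ≤ log x := by
    have h := one_sub_div_le_log_sub_log four_pos (b := z) (by linarith)
    rw [hz, log_div hx0.ne' hy0.ne', ← hz, ← two_mul_log_two] at h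
    linarith [three_le_log hy, log_two_gt_d9]
  have hzlog : 21 / 20 * z ≤ log x := by
    refine le_trans ?_ hlog
    rw [le_sub_comm, div_le_iff₀ (by linarith)]
    nlinarith
  calc x = z * y := (div_mul_cancel₀ x hy0.ne').symm
    _ ≤ z * (21 / 20 * (y - 1)) := by
      gcongr
      linarith
    _ = (y - 1) * (21 / 20 * z) := by ring
    _ ≤ (y - 1) * log x := by
      gcongr
      linarith

lemma div_log_rpow_le_card_of_le_four_mul (hy : 21 ≤ y) (hyx : y ≤ x) (hx : x ≤ 4 * y) :
    x / log x ^ logb y x ≤ #(smoothNumbersLE x y) := by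
  have hL : 1 ≤ log x := by linarith [three_le_log (hy.trans hyx)]
  have hu : 1 ≤ logb y x := by
    rw [le_logb_iff_rpow_le (by linarith) (by linarith), rpow_one]
    exact hyx
  calc x / log x ^ logb y x ≤ x / log x ^ (1 : ℝ) := by
        have := rpow_le_rpow_of_exponent_le hL hu
        gcongr
        linarith
    _ = x / log x := by rw [rpow_one]
    _ ≤ y - 1 := (div_le_iff₀ (by linarith)).2 (le_sub_one_mul_log hy hyx hx)
    _ ≤ ⌊y⌋₊ := (Nat.sub_one_lt_floor y).le
    _ ≤ #(smoothNumbersLE x y) := mod_cast floor_le_card_smoothNumbersLE hyx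

lemma div_log_rpow_le_card_of_four_mul_le (hy : 21 ≤ y) (hx : 4 * y ≤ x) (hxy : x ≤ y * y) :
    x / log x ^ logb y x ≤ #(smoothNumbersLE x y) := by
  have hy0 : 0 < y := by linarith
  have hx0 : 0 < x := by linarith
  have hz4 : 4 ≤ x / y := (le_div_iff₀ hy0).2 hx
  have hl : 3 ≤ log y := three_le_log hy
  have hL : 0 < log x := log_pos (by linarith)
  set θ := logb y (x / y)
  have hθ : 0 ≤ θ := logb_nonneg (by linarith) (by linarith)
  have hθl : log (x / y) = θ * log y := (div_mul_cancel₀ _ (by linarith)).symm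
  have hlogx : log x = (1 + θ) * log y := by
    rw [log_div hx0.ne' hy0.ne'] at hθl
    linarith
  have hlogyz : log (y / (x / y)) = (1 - θ) * log y := by
    rw [log_div hy0.ne' (by positivity), hθl]
    ring
  rw [div_le_iff₀ (by positivity), logb_eq_logb_div_add_one hx0.ne' (by linarith),
    rpow_add_one hL.ne']
  set T := 4 / 5 + max 0 (log (y / (x / y)) - 1 / 4)
  have hT : 1 ≤ 0.49 * T * log x ^ θ := by
    simpa only [T, hlogx, hlogyz] using one_le_mul_four_fifths_add_max_mul_rpow hl hθ
  have hsum : 0.49 * (x * T) ≤ #(smoothNumbersLE x y) * log x :=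
    calc 0.49 * (x * T) ≤ 0.49 * ∑ m ∈ Ioc 0 ⌊y⌋₊, min y (x / m) := by
          gcongr
          exact mul_four_fifths_add_max_le_sum_min hy0 hxy hz4
      _ ≤ #(smoothNumbersLE x y) * log x :=
          mul_sum_min_le_card_mul_log hy0 (by linarith) hxy fun t ht ↦
            mul_le_psi_of_four_le (hz4.trans ht)
  calc x ≤ x * (0.49 * T * log x ^ θ) := le_mul_of_one_le_right hx0.le hT
    _ = 0.49 * (x * T) * log x ^ θ := by ring
    _ ≤ #(smoothNumbersLE x y) * log x * log x ^ θ := by gcongr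
    _ = #(smoothNumbersLE x y) * (log x ^ θ * log x) := by ring

/-! ### Induction on the size of `x` -/

lemma div_log_rpow_le_card_of_div (hy : 5 ≤ y) (hxy : y * y ≤ x)
    (ih : x / y / log (x / y) ^ logb y (x / y) ≤ #(smoothNumbersLE (x / y) y)) :
    x / log x ^ logb y x ≤ #(smoothNumbersLE x y) := by
  have hy0 : 0 < y := by linarith
  have hx0 : 0 < x := by nlinarith
  have hl : 0 < log y := log_pos (by linarith)
  have hlogx : log x = log y + log (x / y) := by
    rw [log_div hx0.ne' hy0.ne', add_sub_cancel]
  have hM : log y ≤ log (x / y) := log_le_log hy0 ((le_div_iff₀ hy0).2 hxy)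
  have hM0 : 0 < log (x / y) := hl.trans_le hM
  have hL : 0 < log x := by linarith
  set v := logb y (x / y)
  have bernoulli : 2 * log (x / y) ^ v ≤ log x ^ v :=
    (two_mul_rpow_le_add_rpow hl hM).trans_eq (by rw [hlogx]; rfl)
  rw [logb_eq_logb_div_add_one hx0.ne' (by linarith), rpow_add_one hL.ne', ← div_div,
    div_le_iff₀ hL]
  calc x / log x ^ v ≤ x / (2 * log (x / y) ^ v) := by gcongr
    _ = y / 2 * (x / y / log (x / y) ^ v) := by field_simp
    _ ≤ psi y * #(smoothNumbersLE (x / y) y) := by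
      gcongr
      exact half_le_psi_of_five_le hy
    _ ≤ #(smoothNumbersLE x y) * log x := psi_mul_card_le_card_mul_log (by linarith)

lemma div_log_rpow_le_card_of_le_pow (hy : 21 ≤ y) (k : ℕ) :
    ∀ {x : ℝ}, y ≤ x → x ≤ y ^ (k + 2) → x / log x ^ logb y x ≤ #(smoothNumbersLE x y) := by
  have hy0 : 0 < y := by linarith
  induction k with
  | zero =>
    intro x hyx hx
    rw [zero_add, sq] at hx
    rcases le_total x (4 * y) with hx4 | hx4
    · exact div_log_rpow_le_card_of_le_four_mul hy hyx hx4
    · exact div_log_rpow_le_card_of_four_mul_le hy hx4 hx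
  | succ k ih =>
    intro x hyx hx
    rcases le_total x (y ^ (k + 2)) with hxk | hxk
    · exact ih hyx hxk
    have hxy : y * y ≤ x := by
      rw [← sq]
      exact (pow_le_pow_right₀ (by linarith) (by omega)).trans hxk
    refine div_log_rpow_le_card_of_div (by linarith) hxy
      (ih ((le_div_iff₀ hy0).2 hxy) ((div_le_iff₀ hy0).2 ?_))
    rwa [← pow_succ]

end

/-- Pomerance's smooth-number bound: if `2 ≤ y ≤ x` and `x ≥ 4`, then the number
`ψ(x, y)` of `y`-smooth positive integers up to `x` satisfies
`ψ(x, y) ≥ x^(1 − (log log x)/(log y))`. -/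
theorem smooth_count_lower_bound (x y : ℝ) (hy : 2 ≤ y) (hyx : y ≤ x) (hx : 4 ≤ x) :
    x ^ (1 - Real.log (Real.log x) / Real.log y) ≤
      ({n : ℕ | 1 ≤ n ∧ (n : ℝ) ≤ x ∧ ∀ p : ℕ, p.Prime → p ∣ n → (p : ℝ) ≤ y}.ncard : ℝ) := by
  have hset : {n : ℕ | 1 ≤ n ∧ (n : ℝ) ≤ x ∧ ∀ p : ℕ, p.Prime → p ∣ n → (p : ℝ) ≤ y} =
      smoothNumbersLE x y := by
    ext n
    exact mem_smoothNumbersLE.symm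
  rw [hset, Set.ncard_coe_finset, rpow_one_sub_log_log_div (by linarith)]
  rcases le_total y 21 with hy21 | hy21
  · exact div_log_rpow_le_card_of_le_twenty_one hy hx hyx hy21
  · obtain ⟨k, hk⟩ := pow_unbounded_of_one_lt x (show 1 < y by linarith)
    exact div_log_rpow_le_card_of_le_pow hy21 k hyx
      (hk.le.trans (pow_le_pow_right₀ (by linarith) (by omega)))
end

section
/- Let N ≥ 100 be a composite integer and let D be a positive integer with D < N and D > exp(√(2 · log N · log log N)). Let M be a positive integer such that every integer a with 1 ≤ a ≤ ⌈√D⌉ is coprime to N and satisfies a^M ≡ 1 (mod N). Then the smallest prime divisor p of N satisfies p ≤ M · √D. -/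
/-!
Let `p` be a prime divisor of `N` with `p ≤ √N`, and `y = ⌈√D⌉`. Modulo `p`, every prime `q ≤ y` is
an `M`-th root of unity, hence so is every `y`-smooth number, and there are at most `M` such roots:
thus `Ψ(p - 1, y) ≤ M`, where `Ψ(n, y)` counts the `y`-smooth positive integers up to `n`.

If `p ≤ D`, the trivial bound `y ≤ Ψ(p - 1, y)` is enough. If `D < p`, then `Ψ(n, y)` is bounded
below by induction on `n`: counting prime power divisors of smooth numbers gives
`∑ q ≤ y, Λ(q) Ψ(n / q, y) ≤ Ψ(n, y) log n`,
which propagates the bound `((n + 1) / 2) ^ (1 - α) ≤ Ψ(n, y)` as long as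
`log n ≤ ∑ q ≤ y, Λ(q) q ^ (α - 1)`. The sum is at least `(2 / 3) y ^ α` by Chebyshev's estimate.
The choice `α = log (√D / 2) / log (p / 2)` turns the bound for `n = p - 1` into `p / √D`, and the
lower bound on `D` makes it admissible.
-/

open ArithmeticFunction hiding log
open Chebyshev Finset Real

/-- The de Bruijn function `Ψ(n, y)`: the number of `y`-smooth positive integers up to `n`. The
bound `y` on the prime factors is inclusive, unlike in `Nat.smoothNumbersUpTo`. -/
def smoothCount (n y : ℕ) : ℕ :=
  #(Nat.smoothNumbersUpTo n (y + 1))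

lemma min_le_smoothCount (n y : ℕ) : min n y ≤ smoothCount n y := by
  have hsub : Icc 1 (min n y) ⊆ Nat.smoothNumbersUpTo n (y + 1) := fun k hk ↦ by
    obtain ⟨hk1, hk⟩ := mem_Icc.1 hk
    exact Nat.mem_smoothNumbersUpTo.2 ⟨by omega, Nat.mem_smoothNumbers_of_lt hk1 (by omega)⟩
  simpa [smoothCount] using card_le_card hsub

lemma natCast_pow_eq_one_of_mem_smoothNumbers {R : Type*} [CommSemiring R] {k M m : ℕ}
    (h : ∀ q < k, q.Prime → (q : R) ^ M = 1) (hm : m ∈ Nat.smoothNumbers k) :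
    (m : R) ^ M = 1 := by
  induction m using Nat.recOnMul with
  | zero => exact absurd rfl (Nat.ne_zero_of_mem_smoothNumbers hm)
  | one => simp
  | prime q hq => exact h q (Nat.mem_smoothNumbers'.1 hm q hq dvd_rfl) hq
  | mul a b ha hb =>
    rw [Nat.cast_mul, mul_pow, ha (Nat.mem_smoothNumbers_of_dvd hm (dvd_mul_right _ _)),
      hb (Nat.mem_smoothNumbers_of_dvd hm (dvd_mul_left _ _)), one_mul]

lemma smoothCount_le_of_forall_prime_pow_eq_one (R : Type*) [CommRing R] [IsDomain R] {p : ℕ}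
    [CharP R p] {n y M : ℕ} (hn : n < p) (hM : 0 < M)
    (h : ∀ q ≤ y, q.Prime → (q : R) ^ M = 1) : smoothCount n y ≤ M := by
  classical
  have hcard : smoothCount n y ≤ #(Polynomial.nthRoots M (1 : R)).toFinset := by
    refine card_le_card_of_injOn (fun m : ℕ ↦ (m : R)) (fun m hm ↦ ?_)
      ((CharP.natCast_injOn_Iio R p).mono fun m hm ↦ ?_)
    · rw [mem_coe, Multiset.mem_toFinset, Polynomial.mem_nthRoots hM]
      exact natCast_pow_eq_one_of_mem_smoothNumbers (fun q hq ↦ h q (by omega))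
        (Nat.mem_smoothNumbersUpTo.1 hm).2
    · exact (Nat.mem_smoothNumbersUpTo.1 hm).1.trans_lt hn
  exact hcard.trans ((Multiset.toFinset_card_le _).trans (Polynomial.card_nthRoots _ _))

lemma smoothCount_div_le_card_filter_dvd {n y q : ℕ} (hq : 0 < q) (hqy : q ≤ y) :
    smoothCount (n / q) y ≤ #{m ∈ Nat.smoothNumbersUpTo n (y + 1) | q ∣ m} := by
  refine card_le_card_of_injOn (q * ·) (fun k hk ↦ ?_) (mul_right_injective₀ hq.ne').injOn
  obtain ⟨hkn, hk⟩ := Nat.mem_smoothNumbersUpTo.1 hk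
  have hqk : q * k ≤ n := (Nat.mul_le_mul_left q hkn).trans (Nat.mul_div_le n q)
  have hsmooth : q * k ∈ Nat.smoothNumbers (y + 1) :=
    Nat.mul_mem_smoothNumbers (Nat.mem_smoothNumbers_of_lt hq (by omega)) hk
  exact mem_filter.2 ⟨Nat.mem_smoothNumbersUpTo.2 ⟨hqk, hsmooth⟩, dvd_mul_right q k⟩

lemma sum_vonMangoldt_filter_dvd_le_log {s : Finset ℕ} {m : ℕ} (hm : m ≠ 0) :
    ∑ q ∈ s with q ∣ m, Λ q ≤ log m := by
  rw [← vonMangoldt_sum]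
  exact sum_le_sum_of_subset_of_nonneg
    (fun q hq ↦ Nat.mem_divisors.2 ⟨(mem_filter.1 hq).2, hm⟩) fun _ _ _ ↦ vonMangoldt_nonneg

lemma sum_vonMangoldt_mul_smoothCount_div_le (n y : ℕ) :
    ∑ q ∈ Ioc 0 y, Λ q * smoothCount (n / q) y ≤ smoothCount n y * log n := by
  set S := Nat.smoothNumbersUpTo n (y + 1)
  calc ∑ q ∈ Ioc 0 y, Λ q * smoothCount (n / q) y
      ≤ ∑ q ∈ Ioc 0 y, ∑ m ∈ S with q ∣ m, Λ q := sum_le_sum fun q hq ↦ by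
        obtain ⟨hq0, hqy⟩ := mem_Ioc.1 hq
        rw [sum_const, nsmul_eq_mul, mul_comm]
        gcongr
        exact smoothCount_div_le_card_filter_dvd hq0 hqy
    _ = ∑ m ∈ S, ∑ q ∈ Ioc 0 y with q ∣ m, Λ q := by
        simp only [sum_filter]
        exact sum_comm
    _ ≤ ∑ _m ∈ S, log n := sum_le_sum fun m hm ↦ by
        obtain ⟨hmn, hm⟩ := Nat.mem_smoothNumbersUpTo.1 hm
        have hm0 : m ≠ 0 := Nat.ne_zero_of_mem_smoothNumbers hm
        refine (sum_vonMangoldt_filter_dvd_le_log hm0).trans ?_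
        gcongr
    _ = smoothCount n y * log n := by
        rw [sum_const, nsmul_eq_mul, smoothCount]

/-- `n + 1` rather than `n` occurs here because `(n + 1) / q ≤ ⌊n / q⌋ + 1`, so that rounding loses
nothing in the induction. -/
theorem rpow_one_sub_le_smoothCount {n y : ℕ} {α : ℝ} (hn : 0 < n) (hy : 0 < y) (hα0 : 0 ≤ α)
    (hα1 : α ≤ 1) (hlog : log n ≤ ∑ q ∈ Ioc 0 y, Λ q * (q : ℝ) ^ (α - 1)) :
    (((n : ℝ) + 1) / 2) ^ (1 - α) ≤ smoothCount n y := by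
  induction n using Nat.strong_induction_on with
  | _ n ih =>
  have hn1 : (1 : ℝ) ≤ n := mod_cast hn
  rcases le_or_gt n y with hny | hyn
  · calc (((n : ℝ) + 1) / 2) ^ (1 - α)
        ≤ ((n : ℝ) + 1) / 2 := rpow_le_self_of_one_le (by linarith) (by linarith)
      _ ≤ n := by linarith
      _ ≤ smoothCount n y := mod_cast (le_min le_rfl hny).trans (min_le_smoothCount n y)
  have hlog0 : 0 < log n := log_pos (by exact_mod_cast (show 1 < n by omega))
  refine le_of_mul_le_mul_right ?_ hlog0
  calc (((n : ℝ) + 1) / 2) ^ (1 - α) * log n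
      ≤ (((n : ℝ) + 1) / 2) ^ (1 - α) * ∑ q ∈ Ioc 0 y, Λ q * (q : ℝ) ^ (α - 1) := by gcongr
    _ = ∑ q ∈ Ioc 0 y, Λ q * ((((n : ℝ) + 1) / 2) ^ (1 - α) * (q : ℝ) ^ (α - 1)) := by
      rw [mul_sum]
      exact sum_congr rfl fun _ _ ↦ mul_left_comm _ _ _
    _ ≤ ∑ q ∈ Ioc 0 y, Λ q * smoothCount (n / q) y := sum_le_sum fun q hq ↦ ?_
    _ ≤ smoothCount n y * log n := sum_vonMangoldt_mul_smoothCount_div_le n y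
  obtain ⟨hq, hqy⟩ := mem_Ioc.1 hq
  rcases (show 1 ≤ q from hq).eq_or_lt with rfl | hq1
  · simp
  refine mul_le_mul_of_nonneg_left ?_ vonMangoldt_nonneg
  have hlt : n / q < n := Nat.div_lt_self hn hq1
  have hdiv : 0 < n / q := Nat.div_pos (by omega) hq
  have hround : ((n : ℝ) + 1) / q ≤ (n / q : ℕ) + 1 := by
    rw [div_le_iff₀ (by positivity)]
    exact_mod_cast Nat.lt_mul_of_div_lt (Nat.lt_succ_self (n / q)) hq
  calc (((n : ℝ) + 1) / 2) ^ (1 - α) * (q : ℝ) ^ (α - 1)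
      = (((n : ℝ) + 1) / q / 2) ^ (1 - α) := by
        rw [div_right_comm, div_rpow (y := (q : ℝ)) (by positivity) (by positivity),
          div_eq_mul_inv (_ ^ _), ← rpow_neg (by positivity), neg_sub]
    _ ≤ (((n / q : ℕ) + 1 : ℝ) / 2) ^ (1 - α) :=
        rpow_le_rpow (by positivity) (by gcongr) (by linarith)
    _ ≤ smoothCount (n / q) y := ih (n / q) hlt hdiv (le_trans (by gcongr) hlog)

lemma two_thirds_mul_le_psi {y : ℕ} (hy : 256 ≤ y) : 2 / 3 * (y : ℝ) ≤ ψ y := by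
  have hy' : (256 : ℝ) ≤ y := mod_cast hy
  -- the tangent of `log` at `256 = 2 ^ 8`
  have htangent : log (y + 1) ≤ (y + 1) / 256 + 8 * log 2 - 1 := by
    have := log_le_sub_one_of_pos (x := ((y : ℝ) + 1) / 256) (by positivity)
    rw [log_div (by positivity) (by norm_num), show (256 : ℝ) = 2 ^ 8 by norm_num, log_pow] at this
    push_cast at this
    linarith
  have hlog2 := log_two_gt_d9
  nlinarith [psi_ge y, log_two_lt_d9]

lemma two_thirds_mul_rpow_le_sum_vonMangoldt_mul_rpow {y : ℕ} {α : ℝ} (hy : 256 ≤ y)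
    (hα : α ≤ 1) : 2 / 3 * (y : ℝ) ^ α ≤ ∑ q ∈ Ioc 0 y, Λ q * (q : ℝ) ^ (α - 1) := by
  have hy0 : (0 : ℝ) < y := by exact_mod_cast (show 0 < y by omega)
  calc 2 / 3 * (y : ℝ) ^ α = 2 / 3 * y * (y : ℝ) ^ (α - 1) := by
        rw [mul_assoc, mul_comm (y : ℝ), ← rpow_add_one hy0.ne', sub_add_cancel]
    _ ≤ ψ y * (y : ℝ) ^ (α - 1) := by
        gcongr
        exact two_thirds_mul_le_psi hy
    _ = ∑ q ∈ Ioc 0 y, Λ q * (y : ℝ) ^ (α - 1) := by rw [psi, Nat.floor_natCast, sum_mul]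
    _ ≤ ∑ q ∈ Ioc 0 y, Λ q * (q : ℝ) ^ (α - 1) := sum_le_sum fun q hq ↦ by
        obtain ⟨hq0, hqy⟩ := mem_Ioc.1 hq
        exact mul_le_mul_of_nonneg_left
          (rpow_le_rpow_of_nonpos (mod_cast hq0) (mod_cast hqy) (by linarith)) vonMangoldt_nonneg

/-- The gap `log (4 / 3)` between the factors `2` and `3 / 2` pays for the two shifts by `log 2`. -/
lemma log_three_halves_mul_le {u w : ℝ} (hu : 3 ≤ u) (h : u * log (2 * u) ≤ w ^ 2) :
    log (3 / 2 * u) ≤ w * ((w - log 2) / (u - log 2)) := by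
  have hlog2 := log_two_lt_d9
  have hsplit : log (3 / 2 * u) = log (2 * u) - log (4 / 3) := by
    rw [← log_div (by positivity) (by norm_num)]
    ring_nf
  have hlog43 : 1 / 4 ≤ log (4 / 3) := by
    have := one_sub_inv_le_log_of_pos (x := 4 / 3) (by norm_num)
    norm_num at this ⊢
    exact this
  have hquot : log (2 * u) ≤ w ^ 2 / u := by
    rwa [le_div_iff₀ (by linarith), mul_comm]
  have hshift : w ^ 2 / u - 1 / 4 ≤ w * ((w - log 2) / (u - log 2)) := by
    have hnum : 4 * log 2 * (w * (u - w)) ≤ u * (u - log 2) := by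
      have hamgm : 4 * (w * (u - w)) ≤ u ^ 2 := by nlinarith [sq_nonneg (u - 2 * w)]
      nlinarith [log_pos one_lt_two]
    have hdiff : w * ((w - log 2) / (u - log 2)) - (w ^ 2 / u - 1 / 4) =
        (u * (u - log 2) - 4 * log 2 * (w * (u - w))) / (4 * (u * (u - log 2))) := by
      have : u - log 2 ≠ 0 := by linarith
      field_simp
      ring
    rw [← sub_nonneg, hdiff]
    exact div_nonneg (by linarith) (by nlinarith)
  linarith

lemma three_le_log_s14 {x : ℝ} (hx : 24 ≤ x) : 3 ≤ log x := by
  rw [le_log_iff_exp_le (by linarith), show (3 : ℝ) = (3 : ℕ) by norm_num, ← exp_one_pow]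
  calc exp 1 ^ 3 ≤ 2.7182818286 ^ 3 := by
        gcongr
        exact exp_one_lt_d9.le
    _ ≤ x := by norm_num; linarith

theorem div_le_smoothCount {n y : ℕ} {z : ℝ} (hz : 256 ≤ z) (hzy : z ≤ y) (hzn : z ≤ n + 1)
    (h : log (n + 1) * log (2 * log (n + 1)) ≤ log z ^ 2) :
    ((n : ℝ) + 1) / z ≤ smoothCount n y := by
  have hy : 256 ≤ y := by exact_mod_cast hz.trans hzy
  have hn : 0 < n := by
    have : (256 : ℝ) ≤ n + 1 := hz.trans hzn
    exact_mod_cast (show (0 : ℝ) < n by linarith)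
  have hlogP : 0 < log (((n : ℝ) + 1) / 2) := log_pos (by linarith)
  have hlogn : 3 ≤ log ((n : ℝ) + 1) := three_le_log_s14 (by linarith)
  set α := log (z / 2) / log (((n : ℝ) + 1) / 2) with hα
  have hα0 : 0 ≤ α := div_nonneg (log_nonneg (by linarith)) hlogP.le
  have hα1 : α ≤ 1 := (div_le_one₀ hlogP).2 (log_le_log (by linarith) (by linarith))
  have hpow : (((n : ℝ) + 1) / 2) ^ (1 - α) = (n + 1) / z := by
    rw [rpow_sub (by positivity), rpow_one, rpow_def_of_pos (by positivity) α, hα,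
      mul_div_cancel₀ _ hlogP.ne', exp_log (by linarith)]
    field_simp
  have hlog : log n ≤ ∑ q ∈ Ioc 0 y, Λ q * (q : ℝ) ^ (α - 1) :=
    calc log n ≤ log (n + 1) := log_le_log (mod_cast hn) (by linarith)
      _ ≤ 2 / 3 * z ^ α := by
        have := log_three_halves_mul_le hlogn h
        rw [← log_div (by linarith) two_ne_zero, ← log_div (by positivity) two_ne_zero,
          log_le_iff_le_exp (by positivity), ← rpow_def_of_pos (by linarith)] at this
        linarith
      _ ≤ 2 / 3 * (y : ℝ) ^ α := by gcongr
      _ ≤ _ := two_thirds_mul_rpow_le_sum_vonMangoldt_mul_rpow hy hα1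
  rw [← hpow]
  exact rpow_one_sub_le_smoothCount hn (by omega) hα0 hα1 hlog

lemma le_eight_mul_log {x : ℝ} (hx : 4 / 3 ≤ x) (hx24 : x ≤ 24) : x ≤ 8 * log x := by
  rcases le_total x 3 with hx3 | hx3
  · have hinv := one_sub_inv_le_log_of_pos (x := x) (by linarith)
    have : x ≤ 8 * (1 - x⁻¹) := by
      rw [← mul_le_mul_iff_left₀ (show 0 < x by linarith), mul_assoc, sub_mul,
        inv_mul_cancel₀ (by linarith)]
      nlinarith
    linarith
  · have hmem : x ∈ Set.Ici (exp 1) := exp_one_lt_three.le.trans hx3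
    have hanti : log 24 / 24 ≤ log x / x :=
      log_div_self_antitoneOn hmem (hmem.trans hx24) hx24
    have hlog24 := three_le_log_s14 (x := 24) le_rfl
    rw [div_le_div_iff₀ (by norm_num) (by linarith)] at hanti
    nlinarith

lemma twentyFour_lt_of_sqrt_mul_log_lt {L w : ℝ} (hL : 4 / 3 ≤ L)
    (hw : √(2 * L * log L) < 2 * w) (hwL : 4 * w < L) : 24 < L := by
  by_contra! hL24
  have hw0 : 0 < 2 * w := (sqrt_nonneg _).trans_lt hw
  have : L ^ 2 < L ^ 2 :=
    calc L ^ 2 = L * L := sq L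
      _ ≤ L * (8 * log L) := by
        gcongr
        exact le_eight_mul_log hL hL24
      _ < (4 * w) ^ 2 := by linarith [lt_sq_of_sqrt_lt hw]
      _ < L ^ 2 := by
        gcongr
        linarith
  exact lt_irrefl _ this

lemma six_lt_of_sqrt_mul_log_lt {L w : ℝ} (hL : 24 < L) (hw : √(2 * L * log L) < 2 * w) :
    6 < w := by
  have hw0 : 0 < 2 * w := (sqrt_nonneg _).trans_lt hw
  have hsq : (12 : ℝ) ^ 2 < (2 * w) ^ 2 :=
    calc (12 : ℝ) ^ 2 = 2 * 24 * 3 := by norm_num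
      _ ≤ 2 * L * log L := by
        gcongr
        exact three_le_log_s14 hL.le
      _ < (2 * w) ^ 2 := lt_sq_of_sqrt_lt hw
  linarith [lt_of_pow_lt_pow_left₀ 2 hw0.le hsq]

lemma div_sqrt_le_smoothCount {n : ℕ} {x D : ℝ} (hn : 0 < n) (hx : ((n : ℝ) + 1) ^ 2 ≤ x)
    (hD : exp (√(2 * log x * log (log x))) < D) (hDn : D < n + 1) :
    ((n : ℝ) + 1) / √D ≤ smoothCount n ⌈√D⌉₊ := by
  have hD0 : 0 < D := (exp_pos _).trans hD
  have hn2 : (2 : ℝ) ≤ n + 1 := by exact_mod_cast (show 2 ≤ n + 1 by omega)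
  have hlogD : log D = 2 * log √D := by rw [log_sqrt hD0.le]; ring
  have hlogx : 2 * log ((n : ℝ) + 1) ≤ log x := by
    have := log_le_log (by positivity) hx
    rwa [log_pow, Nat.cast_two] at this
  have hlogn : log 2 ≤ log ((n : ℝ) + 1) := log_le_log two_pos hn2
  have hw : √(2 * log x * log (log x)) < 2 * log √D := by
    rwa [← hlogD, lt_log_iff_exp_lt hD0]
  have hwn : 2 * log √D < log (n + 1) := hlogD ▸ log_lt_log hD0 hDn
  have hlog2 := log_two_gt_d9
  have hx24 : 24 < log x :=
    twentyFour_lt_of_sqrt_mul_log_lt (by linarith) hw (by linarith)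
  have hw6 := six_lt_of_sqrt_mul_log_lt hx24 hw
  have hz : 256 ≤ √D := by
    rw [← log_le_log_iff (by norm_num) (sqrt_pos.2 hD0), show (256 : ℝ) = 2 ^ 8 by norm_num,
      log_pow]
    push_cast
    linarith [log_two_lt_d9]
  have hzn : √D ≤ n + 1 := by
    rw [← log_le_log_iff (by linarith) (by positivity)]
    linarith
  refine div_le_smoothCount hz (Nat.le_ceil _) hzn ?_
  calc log (n + 1) * log (2 * log (n + 1)) ≤ log x / 2 * log (log x) := by
        gcongr
        · exact log_nonneg (by linarith)
        · linarith
        · linarith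
    _ ≤ log √D ^ 2 := by linarith [lt_sq_of_sqrt_lt hw]

theorem minFac_le_M_mul_sqrt_D_general {p M : ℕ} {x D : ℝ} (hp : p.Prime) (hpx : (p : ℝ) ^ 2 ≤ x)
    (hM : 0 < M) (hD : exp (√(2 * log x * log (log x))) < D)
    (h : ∀ q ≤ ⌈√D⌉₊, q.Prime → q ^ M ≡ 1 [MOD p]) :
    (p : ℝ) ≤ M * √D := by
  have : Fact p.Prime := ⟨hp⟩
  have hroot (q : ℕ) (hq : q ≤ ⌈√D⌉₊) (hqp : q.Prime) : (q : ZMod p) ^ M = 1 := by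
    exact_mod_cast (ZMod.natCast_eq_natCast_iff _ _ _).2 (h q hq hqp)
  have hyp : ⌈√D⌉₊ < p := by
    by_contra! hle
    simpa [hM.ne'] using hroot p hle hp
  have hcount : (smoothCount (p - 1) ⌈√D⌉₊ : ℝ) ≤ M :=
    mod_cast smoothCount_le_of_forall_prime_pow_eq_one (ZMod p) (Nat.sub_one_lt hp.ne_zero) hM hroot
  have hD0 : 0 < D := (exp_pos _).trans hD
  rcases le_or_gt (p : ℝ) D with hpD | hDp
  · have hceil : ⌈√D⌉₊ ≤ smoothCount (p - 1) ⌈√D⌉₊ :=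
      (le_min (by omega) le_rfl).trans (min_le_smoothCount _ _)
    have hsqrt : √D ≤ M := (Nat.le_ceil _).trans ((Nat.cast_le.2 hceil).trans hcount)
    calc (p : ℝ) ≤ √D * √D := hpD.trans_eq (mul_self_sqrt hD0.le).symm
      _ ≤ M * √D := by gcongr
  · have hsucc : ((p - 1 : ℕ) : ℝ) + 1 = p := mod_cast Nat.sub_add_cancel hp.one_le
    rw [← div_le_iff₀ (sqrt_pos.2 hD0)]
    rw [← hsucc] at hpx hDp ⊢
    exact (div_sqrt_le_smoothCount (Nat.sub_pos_of_lt hp.one_lt) hpx hD hDp).trans hcount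

/-- Let `N ≥ 100` be composite and `D` a positive integer with `D < N` and
`D > exp(√(2 · log N · log log N))`. Let `M` be a positive integer such that every
integer `a` with `1 ≤ a ≤ ⌈√D⌉` is coprime to `N` and satisfies `a^M ≡ 1 (mod N)`.
Then the smallest prime divisor `p` of `N` satisfies `p ≤ M · √D`. -/
theorem minFac_le_M_mul_sqrt_D
    (N D M : ℕ) (hN : 100 ≤ N) (hcomp : ¬ N.Prime) (hDN : D < N) (hD1 : 1 ≤ D)
    (hM : 0 < M)
    (hD : Real.exp (Real.sqrt (2 * Real.log N * Real.log (Real.log N))) < D)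
    (h : ∀ a : ℕ, 1 ≤ a → a ≤ ⌈Real.sqrt D⌉₊ → Nat.Coprime a N ∧ a ^ M ≡ 1 [MOD N]) :
    (N.minFac : ℝ) ≤ M * Real.sqrt D := by
  have hsq : (N.minFac : ℝ) ^ 2 ≤ N := mod_cast Nat.minFac_sq_le_self (by omega) hcomp
  exact minFac_le_M_mul_sqrt_D_general (Nat.minFac_prime (by omega)) hsq hM hD
    fun q hq hqp ↦ (h q hqp.one_le hq).2.of_dvd N.minFac_dvd
end
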